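/- The second player, Green, has a winning strategy in Sim: there is a strategy for Green in the avoidance game on K_6 (with monochromatic triangles forbidden) such that in every play in which Green follows it, Red is eventually the player unable to make a legal move. -/

import Mathlib

/-- The 15 edges of the complete graph `K_6`: unordered pairs of distinct vertices. -/
abbrev Edge6 := {e : Sym2 (Fin 6) // ¬ e.IsDiag}

/-- The edge of `K_6` joining two distinct vertices. -/
def mkEdge6 (a b : Fin 6) (h : a ≠ b) : Edge6 :=
  ⟨s(a, b), by simpa using h⟩

/-- A Sim position: a partial coloring of the edges of `K_6`
(`none` = uncolored, `some true` = Red, `some false` = Green). -/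
abbrev Pos := Edge6 → Option Bool

/-- The initial position: all edges uncolored. -/
def startPos : Pos := fun _ => none

/-- Coloring edge `e` in color `c`. -/
def colorEdge (p : Pos) (c : Bool) (e : Edge6) : Pos :=
  Function.update p e (some c)

/-- Position `p` contains a triangle all three of whose edges have color `c`. -/
def HasMonoTri (p : Pos) (c : Bool) : Prop :=
  ∃ a b d : Fin 6, ∃ hab : a ≠ b, ∃ had : a ≠ d, ∃ hbd : b ≠ d,
    p (mkEdge6 a b hab) = some c ∧ p (mkEdge6 a d had) = some c ∧
      p (mkEdge6 b d hbd) = some c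

/-- A legal Sim move for player `c` at position `p`: color a so-far uncolored edge, but
it is forbidden to create a monochromatic triangle in one's own color. -/
def Legal (p : Pos) (c : Bool) (e : Edge6) : Prop :=
  p e = none ∧ ¬ HasMonoTri (colorEdge p c e) c

/-- The player making the `k`-th move (moves are numbered from 0):
Red (`true`) moves first and the players alternate. -/
def playerAt (k : ℕ) : Bool := decide (k % 2 = 0)

/-- The position reached from `p` after the list of moves `ms`, the first element of
`ms` being made by the player moving at step `k`. -/
def posFrom (p : Pos) (k : ℕ) : List Edge6 → Pos
  | [] => p
  | e :: ms => posFrom (colorEdge p (playerAt k) e) (k + 1) ms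

/-- The position reached from the empty board after the list of moves `ms`. -/
def posAfter (ms : List Edge6) : Pos := posFrom startPos 0 ms

/-- A play (list of moves, alternately by Red and Green, Red first) in which Green
follows the strategy `σ`: every move is legal for the player making it, and every move
of Green is the one prescribed by `σ` at the current position. -/
def FollowsGreen (σ : Pos → Edge6) (ms : List Edge6) : Prop :=
  ∀ i, ∀ h : i < ms.length,
    Legal (posAfter (ms.take i)) (playerAt i) (ms.get ⟨i, h⟩) ∧
    (playerAt i = false → ms.get ⟨i, h⟩ = σ (posAfter (ms.take i)))

/-!
The game is finite, so it suffices to define the positions won for Green by recursion and to show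
that the empty board is one of them; a strategy is then any choice of moves that stay in won
positions. All first moves of Red are equivalent under permutations of the vertices, so only one of
them has to be refuted, which takes an exhaustive search through some 90 000 positions. The search
becomes feasible for the kernel once edges are vectors of weight two in `𝔽₂⁶`: a triangle is then a
relation `x + y = z`, the edges of a player form one natural number, and updating the list of legal
moves takes one bit test per move.
-/

/-- The positions `p` with the player `c` to move that Green can win, whatever Red does. Being
inductive, the predicate includes that the game ends. -/
inductive GreenWins : Bool → Pos → Prop
  | red {p : Pos} :
      (∀ e, Legal p true e → GreenWins false (colorEdge p true e)) → GreenWins true p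
  | green {p : Pos} {e : Edge6} :
      Legal p false e → GreenWins true (colorEdge p false e) → GreenWins false p

instance : Nonempty Edge6 := ⟨mkEdge6 0 1 (by decide)⟩

/-- Green's strategy: some legal move to a position won for Green, if there is one, and an
arbitrary edge otherwise. -/
noncomputable def greenStrategy (p : Pos) : Edge6 :=
  Classical.epsilon fun e => Legal p false e ∧ GreenWins true (colorEdge p false e)

theorem greenStrategy_spec {p : Pos} (h : GreenWins false p) :
    Legal p false (greenStrategy p) ∧ GreenWins true (colorEdge p false (greenStrategy p)) := by
  cases h with
  | green he hwin =>
    exact Classical.epsilon_spec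
      (p := fun e => Legal p false e ∧ GreenWins true (colorEdge p false e)) ⟨_, he, hwin⟩

theorem GreenWins.colorEdge_of_follows {c : Bool} {p : Pos} {e : Edge6} (h : GreenWins c p)
    (he : Legal p c e) (hσ : c = false → e = greenStrategy p) :
    GreenWins (!c) (colorEdge p c e) := by
  cases c with
  | true => cases h with | red hred => exact hred e he
  | false => exact hσ rfl ▸ (greenStrategy_spec h).2

theorem playerAt_succ (k : ℕ) : playerAt (k + 1) = !playerAt k := by
  rcases Nat.mod_two_eq_zero_or_one k with hk | hk <;> simp [playerAt, Nat.add_mod, hk]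

theorem posFrom_append_singleton (p : Pos) (k : ℕ) (ms : List Edge6) (e : Edge6) :
    posFrom p k (ms ++ [e]) = colorEdge (posFrom p k ms) (playerAt (k + ms.length)) e := by
  induction ms generalizing p k with
  | nil => rfl
  | cons a ms ih =>
    simp only [List.cons_append, posFrom, ih, List.length_cons, Nat.add_assoc, Nat.add_comm]

theorem posAfter_append_singleton (ms : List Edge6) (e : Edge6) :
    posAfter (ms ++ [e]) = colorEdge (posAfter ms) (playerAt ms.length) e := by
  simp only [posAfter, posFrom_append_singleton, Nat.zero_add]

theorem FollowsGreen.of_append_singleton {σ : Pos → Edge6} {ms : List Edge6} {e : Edge6}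
    (h : FollowsGreen σ (ms ++ [e])) :
    FollowsGreen σ ms ∧ Legal (posAfter ms) (playerAt ms.length) e ∧
      (playerAt ms.length = false → e = σ (posAfter ms)) := by
  constructor
  · intro i hi
    have := h i (by simp; lia)
    simpa [List.take_append_of_le_length hi.le, List.getElem_append_left hi] using this
  · simpa using h ms.length (by simp)

theorem FollowsGreen.greenWins (hstart : GreenWins true startPos) {ms : List Edge6}
    (h : FollowsGreen greenStrategy ms) : GreenWins (playerAt ms.length) (posAfter ms) := by
  induction ms using List.reverseRecOn with
  | nil => exact hstart
  | append_singleton ms e ih =>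
    obtain ⟨hms, he, hσ⟩ := h.of_append_singleton
    rw [List.length_append, List.length_singleton, playerAt_succ, posAfter_append_singleton]
    exact (ih hms).colorEdge_of_follows he hσ

/-- The action of a permutation of the vertices on the edges. -/
def permEdge (π : Equiv.Perm (Fin 6)) : Equiv.Perm Edge6 where
  toFun e := ⟨e.1.map π, (Sym2.isDiag_map π.injective).not.2 e.2⟩
  invFun e := ⟨e.1.map π.symm, (Sym2.isDiag_map π.symm.injective).not.2 e.2⟩
  left_inv e := by simp [Sym2.map_map]
  right_inv e := by simp [Sym2.map_map]

theorem permEdge_symm (π : Equiv.Perm (Fin 6)) : (permEdge π).symm = permEdge π.symm := rfl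

theorem exists_permEdge_eq (e f : Edge6) : ∃ π, permEdge π e = f := by
  obtain ⟨⟨a, b⟩, hab⟩ := e
  obtain ⟨⟨c, d⟩, hcd⟩ := f
  obtain ⟨π, ha, hb⟩ := MulAction.is_two_pretransitive_iff.1
    (Equiv.Perm.isMultiplyPretransitive (Fin 6) 2) hab hcd
  exact ⟨π, Subtype.ext (congrArg₂ (s(·, ·)) ha hb)⟩

theorem colorEdge_comp (φ : Equiv.Perm Edge6) (p : Pos) (c : Bool) (e : Edge6) :
    colorEdge (p ∘ φ) c e = colorEdge p c (φ e) ∘ φ := by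
  simp only [colorEdge, Function.update_comp_equiv, Equiv.symm_apply_apply]

theorem HasMonoTri.of_comp_permEdge {π : Equiv.Perm (Fin 6)} {p : Pos} {c : Bool}
    (h : HasMonoTri (p ∘ permEdge π) c) : HasMonoTri p c := by
  obtain ⟨a, b, d, hab, had, hbd, h⟩ := h
  exact ⟨π a, π b, π d, π.injective.ne hab, π.injective.ne had, π.injective.ne hbd, h⟩

theorem hasMonoTri_comp_permEdge {π : Equiv.Perm (Fin 6)} {p : Pos} {c : Bool} :
    HasMonoTri (p ∘ permEdge π) c ↔ HasMonoTri p c := by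
  refine ⟨.of_comp_permEdge, fun h => .of_comp_permEdge (π := π.symm) ?_⟩
  rwa [Function.comp_assoc, ← permEdge_symm, Equiv.self_comp_symm]

theorem legal_comp_permEdge {π : Equiv.Perm (Fin 6)} {p : Pos} {c : Bool} {e : Edge6} :
    Legal (p ∘ permEdge π) c e ↔ Legal p c (permEdge π e) := by
  rw [Legal, colorEdge_comp, hasMonoTri_comp_permEdge, Function.comp_apply, Legal]

theorem GreenWins.comp_permEdge (π : Equiv.Perm (Fin 6)) {c : Bool} {p : Pos}
    (h : GreenWins c p) : GreenWins c (p ∘ permEdge π) := by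
  induction h with
  | red _ ih =>
    exact .red fun e he => colorEdge_comp _ _ _ e ▸ ih _ (legal_comp_permEdge.1 he)
  | @green p e he _ ih =>
    refine .green (e := (permEdge π).symm e) (legal_comp_permEdge.2 ?_) ?_
    · rwa [Equiv.apply_symm_apply]
    · rwa [colorEdge_comp, Equiv.apply_symm_apply]

theorem xor_eq_iff_xor_eq {m n k : ℕ} : m ^^^ n = k ↔ m ^^^ k = n := by
  constructor <;> rintro rfl <;> exact Nat.xor_xor_cancel_left ..

/-- The edge as a vector of weight two in `𝔽₂⁶`, written in binary, so that `^^^` is addition. -/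
def edgeCode (e : Edge6) : ℕ :=
  Sym2.lift ⟨fun a b : Fin 6 => 2 ^ a.val ^^^ 2 ^ b.val, fun _ _ => Nat.xor_comm _ _⟩ e.1

theorem edgeCode_injective : Function.Injective edgeCode := by
  unfold Function.Injective
  decide +kernel

theorem edgeCode_ne_zero : ∀ e, edgeCode e ≠ 0 := by
  decide +kernel

theorem edgeCode_xor_mkEdge6 {a b d : Fin 6} (hab : a ≠ b) (had : a ≠ d) (hbd : b ≠ d) :
    edgeCode (mkEdge6 a b hab) ^^^ edgeCode (mkEdge6 a d had) = edgeCode (mkEdge6 b d hbd) := by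
  simp only [edgeCode, mkEdge6, Sym2.lift_mk]
  rw [Nat.xor_comm (2 ^ a.val), Nat.xor_assoc, Nat.xor_xor_cancel_left]

theorem exists_triangle_of_edgeCode_xor :
    ∀ x y z : Edge6, edgeCode x ^^^ edgeCode y = edgeCode z →
      ∃ a b d : Fin 6, x.1 = s(a, b) ∧ y.1 = s(a, d) ∧ z.1 = s(b, d) := by
  decide +kernel

section

variable {p : Pos} {c : Bool} {e x : Edge6}

theorem hasMonoTri_iff_edgeCode :
    HasMonoTri p c ↔ ∃ x y z, p x = some c ∧ p y = some c ∧ p z = some c ∧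
      edgeCode x ^^^ edgeCode y = edgeCode z := by
  constructor
  · rintro ⟨a, b, d, hab, had, hbd, hx, hy, hz⟩
    exact ⟨_, _, _, hx, hy, hz, edgeCode_xor_mkEdge6 hab had hbd⟩
  · rintro ⟨x, y, z, hx, hy, hz, hxyz⟩
    obtain ⟨a, b, d, hab, had, hbd⟩ := exists_triangle_of_edgeCode_xor x y z hxyz
    obtain ⟨x, hx'⟩ := x
    obtain ⟨y, hy'⟩ := y
    obtain ⟨z, hz'⟩ := z
    obtain rfl : x = s(a, b) := hab
    obtain rfl : y = s(a, d) := had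
    obtain rfl : z = s(b, d) := hbd
    exact ⟨a, b, d, hx', hy', hz', hx, hy, hz⟩

theorem colorEdge_eq_none_iff : colorEdge p c e x = none ↔ x ≠ e ∧ p x = none := by
  by_cases hx : x = e <;> simp [colorEdge, hx]

theorem colorEdge_eq_some_iff : colorEdge p c e x = some c ↔ x = e ∨ p x = some c := by
  by_cases hx : x = e <;> simp [colorEdge, hx]

theorem colorEdge_eq_some_iff_of_ne {c' : Bool} (hc : c' ≠ c) (he : p e = none) :
    colorEdge p c' e x = some c ↔ p x = some c := by
  by_cases hx : x = e <;> simp [colorEdge, hx, hc, he]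

theorem hasMonoTri_colorEdge_iff :
    HasMonoTri (colorEdge p c e) c ↔ HasMonoTri p c ∨
      ∃ x y, p x = some c ∧ p y = some c ∧ edgeCode e ^^^ edgeCode x = edgeCode y := by
  simp only [hasMonoTri_iff_edgeCode, colorEdge_eq_some_iff]
  have h0 := edgeCode_ne_zero
  constructor
  · rintro ⟨x, y, z, rfl | hx, rfl | hy, rfl | hz, hxyz⟩
    -- `e` occurs at most once, as codes are nonzero, and the relation can be solved for its code.
    all_goals grind [xor_eq_iff_xor_eq]
  · rintro (⟨x, y, z, hx, hy, hz, h⟩ | ⟨x, y, hx, hy, h⟩)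
    · exact ⟨x, y, z, .inr hx, .inr hy, .inr hz, h⟩
    · exact ⟨e, x, y, .inl rfl, .inr hx, .inr hy, h⟩

theorem legal_iff_of_not_hasMonoTri (h : ¬HasMonoTri p c) :
    Legal p c e ↔ p e = none ∧
      ¬∃ x y, p x = some c ∧ p y = some c ∧ edgeCode e ^^^ edgeCode x = edgeCode y := by
  rw [Legal, hasMonoTri_colorEdge_iff, or_iff_right h]

theorem legal_colorEdge_iff (he : Legal p c e) :
    Legal (colorEdge p c e) c x ↔ Legal p c x ∧ x ≠ e ∧
      ¬∃ y, p y = some c ∧ edgeCode y = edgeCode x ^^^ edgeCode e := by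
  have hmono : ¬HasMonoTri p c := fun h => he.2 (hasMonoTri_colorEdge_iff.2 (.inl h))
  simp only [legal_iff_of_not_hasMonoTri he.2, legal_iff_of_not_hasMonoTri hmono,
    colorEdge_eq_none_iff, colorEdge_eq_some_iff]
  constructor
  · rintro ⟨⟨hxe, hx⟩, h⟩
    exact ⟨⟨hx, fun ⟨y, z, hy, hz, hxyz⟩ => h ⟨y, z, .inr hy, .inr hz, hxyz⟩⟩, hxe,
      fun ⟨y, hy, hye⟩ => h ⟨e, y, .inl rfl, .inr hy, hye.symm⟩⟩
  · rintro ⟨⟨hx, h⟩, hxe, h'⟩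
    refine ⟨⟨hxe, hx⟩, ?_⟩
    rintro ⟨y, z, rfl | hy, rfl | hz, hxyz⟩
    · rw [Nat.xor_comm, xor_eq_iff_xor_eq, Nat.xor_self] at hxyz
      exact edgeCode_ne_zero x hxyz.symm
    · exact h' ⟨z, hz, hxyz.symm⟩
    · exact h' ⟨y, hy, (xor_eq_iff_xor_eq.1 hxyz).symm⟩
    · exact h ⟨y, z, hy, hz, hxyz⟩

theorem legal_colorEdge_iff_of_ne {c' : Bool} (hc : c' ≠ c)
    (he : p e = none) : Legal (colorEdge p c' e) c x ↔ Legal p c x ∧ x ≠ e := by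
  simp only [Legal, hasMonoTri_colorEdge_iff]
  simp only [HasMonoTri, colorEdge_eq_some_iff_of_ne hc he, colorEdge_eq_none_iff]
  tauto

end

/-- What the search remembers about one player: the number whose binary digits `1` stand at the
codes of the edges he has colored, and the list of the codes of his legal moves. -/
structure Side where
  colored : ℕ
  legal : List ℕ

namespace Side

/-- The player colors the edge with code `e`. By `legal_colorEdge_iff`, a move `x` becomes illegal
exactly when the third edge of a triangle on `x` and `e`, if there is one, is already his. -/
def play (s : Side) (e : ℕ) : Side :=
  ⟨s.colored ||| 2 ^ e, s.legal.filter fun x => x != e && !s.colored.testBit (x ^^^ e)⟩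

/-- The opponent colors the edge with code `e`. -/
def drop (s : Side) (e : ℕ) : Side :=
  ⟨s.colored, s.legal.filter (· != e)⟩

end Side

/-- `s` describes the edges and the legal moves of the player `c` in the position `p`. -/
structure Encodes (p : Pos) (c : Bool) (s : Side) : Prop where
  testBit_iff : ∀ n, s.colored.testBit n ↔ ∃ e, p e = some c ∧ edgeCode e = n
  mem_legal_iff : ∀ n, n ∈ s.legal ↔ ∃ e, Legal p c e ∧ edgeCode e = n

namespace Encodes

variable {p : Pos} {c : Bool} {s : Side} {e : Edge6}

theorem play (h : Encodes p c s) (he : Legal p c e) :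
    Encodes (colorEdge p c e) c (s.play (edgeCode e)) where
  testBit_iff n := by
    simp only [Side.play, Nat.testBit_or, Nat.testBit_two_pow, Bool.or_eq_true, h.testBit_iff,
      decide_eq_true_eq, colorEdge_eq_some_iff, or_and_right, exists_or, exists_eq_left]
    exact or_comm
  mem_legal_iff n := by
    simp only [Side.play, List.mem_filter, h.mem_legal_iff, Bool.and_eq_true, bne_iff_ne,
      Bool.not_eq_true', ← Bool.not_eq_true, h.testBit_iff, legal_colorEdge_iff he]
    constructor
    · rintro ⟨⟨x, hx, rfl⟩, hne, hxe⟩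
      exact ⟨x, ⟨hx, edgeCode_injective.ne_iff.1 hne, hxe⟩, rfl⟩
    · rintro ⟨x, ⟨hx, hne, hxe⟩, rfl⟩
      exact ⟨⟨x, hx, rfl⟩, edgeCode_injective.ne hne, hxe⟩

theorem drop {c' : Bool} (h : Encodes p c s) (hc : c' ≠ c) (he : p e = none) :
    Encodes (colorEdge p c' e) c (s.drop (edgeCode e)) where
  testBit_iff n := by
    simp only [Side.drop, h.testBit_iff, colorEdge_eq_some_iff_of_ne hc he]
  mem_legal_iff n := by
    simp only [Side.drop, List.mem_filter, h.mem_legal_iff, bne_iff_ne,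
      legal_colorEdge_iff_of_ne hc he]
    constructor
    · rintro ⟨⟨x, hx, rfl⟩, hne⟩
      exact ⟨x, ⟨hx, edgeCode_injective.ne_iff.1 hne⟩, rfl⟩
    · rintro ⟨x, ⟨hx, hne⟩, rfl⟩
      exact ⟨⟨x, hx, rfl⟩, edgeCode_injective.ne hne⟩

end Encodes

/-- The empty board, as seen by either player. The legal moves are all codes `2 ^ a + 2 ^ b`,
written out because `Side.force` does not reduce the entries of the list. -/
def startSide : Side :=
  ⟨0, [3, 5, 6, 9, 10, 12, 17, 18, 20, 24, 33, 34, 36, 40, 48]⟩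

theorem mem_startSide_legal_iff (n : ℕ) : n ∈ startSide.legal ↔ ∃ e, edgeCode e = n := by
  constructor
  · revert n
    unfold startSide
    decide +kernel
  · rintro ⟨e, rfl⟩
    revert e
    decide +kernel

theorem legal_startPos (c : Bool) (e : Edge6) : Legal startPos c e := by
  refine ⟨rfl, ?_⟩
  rw [hasMonoTri_colorEdge_iff]
  rintro (⟨_, _, _, _, _, _, h, _⟩ | ⟨_, _, h, _⟩) <;> exact absurd h nofun

theorem encodes_startPos (c : Bool) : Encodes startPos c startSide where
  testBit_iff n := by simp [startSide, startPos]
  mem_legal_iff n := by simp only [mem_startSide_legal_iff, legal_startPos, true_and]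

namespace Side

/-- The value `k n`, with a case distinction that makes the kernel reduce `n` to a numeral first
instead of substituting it unevaluated, and then evaluating it once for each use. -/
def forceNat {α : Type*} (n : ℕ) (k : ℕ → α) : α :=
  match n with
  | 0 => k 0
  | m + 1 => k (m + 1)

/-- The value `k l`, computed after the spine of `l`. -/
def forceList {α β : Type*} : List α → (List α → β) → β
  | [], k => k []
  | a :: l, k => forceList l fun t => k (a :: t)

/-- The value `k s`, computed after `s` itself. -/
def force {α : Type*} (s : Side) (k : Side → α) : α :=
  forceNat s.colored fun m => forceList s.legal fun l => k ⟨m, l⟩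

theorem forceNat_eq {α : Type*} (n : ℕ) (k : ℕ → α) : forceNat n k = k n := by
  cases n <;> rfl

theorem forceList_eq {α β : Type*} (l : List α) (k : List α → β) : forceList l k = k l := by
  induction l generalizing k with
  | nil => rfl
  | cons _ _ ih => exact ih _

theorem force_eq {α : Type*} (s : Side) (k : Side → α) : s.force k = k s := by
  rw [force, forceNat_eq, forceList_eq]

end Side

/-- Whether Green wins in fewer than the given number of moves, by exhaustive search. The Boolean is
the player to move; the first side is Red's and the second is Green's. -/
def searchGreenWins : ℕ → Bool → Side → Side → Bool
  | 0, _, _, _ => false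
  | n + 1, true, R, G => R.legal.all fun e =>
      (R.play e).force fun R' => (G.drop e).force fun G' => searchGreenWins n false R' G'
  | n + 1, false, R, G => G.legal.any fun e =>
      (R.drop e).force fun R' => (G.play e).force fun G' => searchGreenWins n true R' G'

theorem GreenWins.of_search {n : ℕ} {c : Bool} {p : Pos} {R G : Side}
    (hR : Encodes p true R) (hG : Encodes p false G) (h : searchGreenWins n c R G = true) :
    GreenWins c p := by
  induction n generalizing c p R G with
  | zero => exact absurd h Bool.false_ne_true
  | succ n ih =>
    cases c with
    | true =>
      simp only [searchGreenWins, Side.force_eq, List.all_eq_true] at h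
      refine .red fun e he => ?_
      exact ih (hR.play he) (hG.drop nofun he.1) (h _ ((hR.mem_legal_iff _).2 ⟨e, he, rfl⟩))
    | false =>
      simp only [searchGreenWins, Side.force_eq, List.any_eq_true] at h
      obtain ⟨_, hmem, hwin⟩ := h
      obtain ⟨e, he, rfl⟩ := (hG.mem_legal_iff _).1 hmem
      exact .green he (ih (hR.drop nofun he.1) (hG.play he) hwin)

-- Red has colored the edge joining `0` and `1`, of code `3`; fourteen edges are left.
theorem searchGreenWins_startSide :
    searchGreenWins 14 false (startSide.play 3) (startSide.drop 3) = true := by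
  decide +kernel

theorem greenWins_startPos : GreenWins true startPos := by
  have hzo : GreenWins false (colorEdge startPos true (mkEdge6 0 1 (by decide))) :=
    .of_search ((encodes_startPos true).play (legal_startPos _ _))
      ((encodes_startPos false).drop nofun rfl) searchGreenWins_startSide
  refine .red fun e _ => ?_
  obtain ⟨π, hπ⟩ := exists_permEdge_eq e (mkEdge6 0 1 (by decide))
  rw [← hπ] at hzo
  rw [show startPos = startPos ∘ permEdge π from rfl, colorEdge_comp]
  exact hzo.comp_permEdge π

/-- The second player, Green, has a winning strategy in Sim: a strategy `σ` such that
in every play in which Green follows it, whenever it is Green's turn the move prescribed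
by `σ` is legal — hence Green is never unable to move, and since plays are finite, every
play following `σ` ends with Red being the player unable to make a legal move. -/
theorem green_wins_sim :
    ∃ σ : Pos → Edge6, ∀ ms : List Edge6, FollowsGreen σ ms →
      playerAt ms.length = false →
        Legal (posAfter ms) false (σ (posAfter ms)) := by
  refine ⟨greenStrategy, fun ms hms hturn => ?_⟩
  have hwin : GreenWins false (posAfter ms) := hturn ▸ hms.greenWins greenWins_startPos
  exact (greenStrategy_spec hwin).1
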